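/- For all i < j with 1 ≤ i < j ≤ n and every point x ∈ U₀, the series F satisfies ∂²F/∂x_{1i}∂x_{2j}(x) = ∂²F/∂x_{1j}∂x_{2i}(x); that is, F is annihilated by the toric operator ∂_{1i}∂_{2j} − ∂_{1j}∂_{2i}. -/

import Mathlib

open Complex Function Polynomial

/-- Partial derivative of `f` with respect to the coordinate `p`. -/
noncomputable def pd {n : ℕ} (p : Fin 2 × Fin n)
    (f : ((Fin 2 × Fin n) → ℝ) → ℂ) (x : (Fin 2 × Fin n) → ℝ) : ℂ :=
  deriv (fun s : ℝ => f (Function.update x p s)) (x p)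

/-- The coefficient
`c_m = (−1)^{|m|} (∏ₖ (−α_k)_{m_k}) (b^{γ+|m|+1} − a^{γ+|m|+1}) / ((γ+|m|+1) ∏ₖ m_k!)`,
where `(z)_j` is the Pochhammer symbol. -/
noncomputable def cm {n : ℕ} (α : Fin n → ℂ) (γ : ℂ) (a b : ℝ)
    (m : Fin n → ℕ) : ℂ :=
  (-1 : ℂ) ^ (∑ k, m k) * (∏ k, (ascPochhammer ℂ (m k)).eval (-(α k)))
    * ((b : ℂ) ^ (γ + ((∑ k, m k : ℕ) : ℂ) + 1)
        - (a : ℂ) ^ (γ + ((∑ k, m k : ℕ) : ℂ) + 1))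
    / ((γ + ((∑ k, m k : ℕ) : ℂ) + 1) * ∏ k, ((m k).factorial : ℂ))

/-- The series `F(x) = (∏ₖ x_{1k}^{α_k}) Σ_{m ∈ ℕⁿ} c_m ∏ₖ (x_{2k}/x_{1k})^{m_k}`;
the first row of `x` is indexed by `0 : Fin 2`, the second row by `1 : Fin 2`. -/
noncomputable def Fser {n : ℕ} (α : Fin n → ℂ) (γ : ℂ) (a b : ℝ)
    (x : (Fin 2 × Fin n) → ℝ) : ℂ :=
  (∏ k, (x (0, k) : ℂ) ^ (α k)) *
    ∑' m : Fin n → ℕ, cm α γ a b m * ∏ k, ((x (1, k) / x (0, k) : ℝ) : ℂ) ^ m k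

/-!
On `U₀` the series is the Euler integral `F(x) = ∫ₐᵇ t ^ γ ∏ₖ (x₁ₖ + x₂ₖ t) ^ αₖ dt`: factor
`x₁ₖ ^ αₖ` out of each linear form, expand `(1 + (x₂ₖ / x₁ₖ) t) ^ αₖ` by the binomial theorem and
integrate termwise. Differentiating under the integral sign, `∂₁ⱼ` multiplies by `αⱼ` and lowers
`αⱼ` by one, and `∂₂ⱼ` does the same and also raises `γ` by one. Hence `∂₁ᵢ∂₂ⱼ` and `∂₁ⱼ∂₂ᵢ` have
the same effect.
-/

open MeasureTheory
open scoped Topology Interval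

theorem summable_norm_and_hasSum_prod_fin_pi {R : Type*} [NormedCommRing R] [CompleteSpace R]
    {n : ℕ} {κ : Fin n → Type*} {f : ∀ k, κ k → R} {s : Fin n → R}
    (hf : ∀ k, Summable fun p => ‖f k p‖) (hs : ∀ k, HasSum (f k) (s k)) :
    (Summable fun m : ∀ k, κ k => ‖∏ k, f k (m k)‖) ∧
      HasSum (fun m : ∀ k, κ k => ∏ k, f k (m k)) (∏ k, s k) := by
  induction n with
  | zero => exact ⟨(hasSum_fintype _).summable, by simp⟩
  | succ n ih =>
    obtain ⟨hnorm, hsum⟩ := ih (fun k => hf k.succ) (fun k => hs k.succ)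
    have hnorm' := (hf 0).mul_norm hnorm
    have hsum' := (hs 0).mul hsum hnorm'.of_norm
    rw [← (Fin.consEquiv κ).summable_iff, ← (Fin.consEquiv κ).hasSum_iff]
    simpa [Function.comp_def, Fin.prod_univ_succ, Fin.consEquiv] using And.intro hnorm' hsum'

theorem choose_eq_ascPochhammer_eval_neg {K : Type*} [Field K] [CharZero K] (α : K) (p : ℕ) :
    Ring.choose α p = (-1) ^ p * (ascPochhammer K p).eval (-α) / p.factorial := by
  rw [Ring.choose_eq_smul, ascPochhammer_eval_neg_eq_descPochhammer, ← mul_assoc, ← mul_pow,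
    ← aeval_eq_smeval, aeval_def, ← eval_map, descPochhammer_map]
  simp [div_eq_inv_mul]

theorem summable_norm_and_hasSum_choose_mul_pow (α : ℂ) {z : ℂ} (hz : ‖z‖ < 1) :
    (Summable fun p => ‖Ring.choose α p * z ^ p‖) ∧
      HasSum (fun p => Ring.choose α p * z ^ p) ((1 + z) ^ α) := by
  have hseries := one_add_cpow_hasFPowerSeriesOnBall_zero (a := α)
  have hmem : z ∈ Metric.eball (0 : ℂ) 1 := by
    simpa [← ofReal_norm, ENNReal.ofReal_lt_one] using hz
  have hnorm := (binomialSeries ℂ α).summable_norm_apply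
    (Metric.eball_subset_eball hseries.r_le hmem)
  simpa only [binomialSeries_apply, List.ofFn_const, List.prod_replicate, smul_eq_mul, zero_add]
    using And.intro hnorm (hseries.hasSum hmem)

theorem summable_norm_and_hasSum_prod_choose_mul_pow {n : ℕ} (α : Fin n → ℂ) {z : Fin n → ℂ}
    (hz : ∀ k, ‖z k‖ < 1) :
    (Summable fun m : Fin n → ℕ => ‖∏ k, Ring.choose (α k) (m k) * z k ^ m k‖) ∧
      HasSum (fun m : Fin n → ℕ => ∏ k, Ring.choose (α k) (m k) * z k ^ m k)
        (∏ k, (1 + z k) ^ α k) :=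
  summable_norm_and_hasSum_prod_fin_pi (f := fun k p => Ring.choose (α k) p * z k ^ p)
    (fun k => (summable_norm_and_hasSum_choose_mul_pow (α k) (hz k)).1)
    (fun k => (summable_norm_and_hasSum_choose_mul_pow (α k) (hz k)).2)

theorem hasSum_integral_mul_prod_one_add_cpow {n : ℕ} (α : Fin n → ℂ) {v : Fin n → ℂ}
    {g : ℝ → ℂ} {a b R : ℝ} (hg : IntervalIntegrable g volume a b) (hR : ∀ t ∈ [[a, b]], |t| ≤ R)
    (hv : ∀ k, ‖v k‖ * R < 1) :
    HasSum (fun m : Fin n → ℕ => ∫ t in a..b, g t * ∏ k, Ring.choose (α k) (m k) * (v k * t) ^ m k)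
      (∫ t in a..b, g t * ∏ k, (1 + v k * t) ^ α k) := by
  have hR0 : 0 ≤ R := (abs_nonneg a).trans (hR a Set.left_mem_uIcc)
  have hle : ∀ t ∈ Ι a b, ∀ k, ‖v k * t‖ ≤ ‖v k * R‖ := fun t ht k => by
    simp only [norm_mul, norm_real, Real.norm_eq_abs, abs_of_nonneg hR0]
    gcongr
    exact hR t (Set.uIoc_subset_uIcc ht)
  have hlt : ∀ k, ‖v k * R‖ < 1 := fun k => by
    simpa only [norm_mul, norm_real, Real.norm_eq_abs, abs_of_nonneg hR0] using hv k
  have hsummable := (summable_norm_and_hasSum_prod_choose_mul_pow α hlt).1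
  refine intervalIntegral.hasSum_integral_of_dominated_convergence
    (fun m t => ‖g t‖ * ‖∏ k, Ring.choose (α k) (m k) * (v k * R) ^ m k‖)
    (fun m => ?meas) (fun m => .of_forall fun t ht => ?bound)
    (.of_forall fun t _ => hsummable.mul_left _) ?bound_integrable
    (.of_forall fun t ht => HasSum.mul_left _ ?pointwise)
  case meas =>
    exact hg.aestronglyMeasurable_restrict_uIoc.mul (by fun_prop)
  case bound =>
    simp only [norm_mul (g t), norm_prod, norm_mul (Ring.choose _ _), norm_pow]
    gcongr with k
    exact hle t ht k
  case bound_integrable =>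
    simpa only [tsum_mul_left] using hg.norm.mul_const _
  case pointwise =>
    exact (summable_norm_and_hasSum_prod_choose_mul_pow α
      fun k => (hle t ht k).trans_lt (hlt k)).2

theorem hasDerivAt_intervalIntegral_of_continuousOn {𝕜 E : Type*} [RCLike 𝕜]
    [NormedAddCommGroup E] [NormedSpace ℝ E] [NormedSpace 𝕜 E] {f f' : 𝕜 → ℝ → E} {s : Set 𝕜}
    {z : 𝕜} {a b : ℝ} (hs : s ∈ 𝓝 z) (hf : ∀ w ∈ s, ContinuousOn (f w) [[a, b]])
    (hf' : ContinuousOn (uncurry f') (s ×ˢ [[a, b]]))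
    (hderiv : ∀ w ∈ s, ∀ t ∈ [[a, b]], HasDerivAt (f · t) (f' w t) w) :
    HasDerivAt (fun w => ∫ t in a..b, f w t) (∫ t in a..b, f' z t) z := by
  obtain ⟨K, hK, hKs, hKcompact⟩ := local_compact_nhds hs
  obtain ⟨C, hC⟩ := (hKcompact.prod isCompact_uIcc).exists_bound_of_continuousOn
    (hf'.mono (Set.prod_mono_left hKs))
  have hz : z ∈ s := mem_of_mem_nhds hs
  have hf'z : ContinuousOn (f' z) [[a, b]] :=
    hf'.comp (f := fun t => (z, t)) (by fun_prop) fun t ht => ⟨hz, ht⟩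
  refine (intervalIntegral.hasDerivAt_integral_of_dominated_loc_of_deriv_le (bound := fun _ => C)
    hK ?_ (hf z hz).intervalIntegrable hf'z.intervalIntegrable.aestronglyMeasurable_restrict_uIoc
    (.of_forall fun t ht w hw => hC (w, t) ⟨hw, Set.uIoc_subset_uIcc ht⟩) intervalIntegrable_const
    (.of_forall fun t ht w hw => hderiv w (hKs hw) t (Set.uIoc_subset_uIcc ht))).2
  filter_upwards [hs] with w hw
  exact (hf w hw).intervalIntegrable.aestronglyMeasurable_restrict_uIoc

theorem hasDerivAt_prod_cpow_update {ι : Type*} [Fintype ι] [DecidableEq ι] (α : ι → ℂ)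
    {z : ι → ℂ} {j : ι} (hz : z j ∈ slitPlane) :
    HasDerivAt (fun w => ∏ k, update z j w k ^ α k)
      (α j * ∏ k, z k ^ (α - Pi.single j 1 : ι → ℂ) k) (z j) := by
  have hupdate (w : ℂ) : ∏ k, update z j w k ^ α k = w ^ α j * ∏ k ∈ {j}ᶜ, z k ^ α k := by
    rw [funext (apply_update (fun k u => u ^ α k) z j w),
      Finset.prod_update_of_mem (Finset.mem_univ j), Finset.compl_eq_univ_sdiff]
  have hlower : ∏ k, z k ^ (α - Pi.single j 1 : ι → ℂ) k =
      z j ^ (α j - 1) * ∏ k ∈ {j}ᶜ, z k ^ α k := by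
    rw [Fintype.prod_eq_mul_prod_compl j]
    congr 1
    · simp
    · refine Finset.prod_congr rfl fun k hk => ?_
      simp_all
  simp only [hupdate, hlower, ← mul_assoc]
  exact (hasStrictDerivAt_cpow_const hz).hasDerivAt.mul_const _

section EulerIntegral

variable {ι : Type*}

/-- The linear forms `ℓₖ(t) = x₁ₖ + x₂ₖ t` whose powers make up the Euler integrand. -/
def linearForms (x : Fin 2 × ι → ℝ) (t : ℝ) : ι → ℝ :=
  fun k => x (0, k) + x (1, k) * t

/-- The points at which all the linear forms are positive on the segment between `a` and `b`, so
that the Euler integral over this segment is smooth there. -/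
def eulerDomain (ι : Type*) (a b : ℝ) : Set (Fin 2 × ι → ℝ) :=
  {x | ∀ t ∈ [[a, b]], ∀ k, 0 < linearForms x t k}

/-- The integrand `t ^ γ ∏ₖ ℓₖ(t) ^ αₖ` of the Euler integral. -/
noncomputable def eulerIntegrand [Fintype ι] (α : ι → ℂ) (γ : ℂ) (x : Fin 2 × ι → ℝ) (t : ℝ) : ℂ :=
  (t : ℂ) ^ γ * ∏ k, (linearForms x t k : ℂ) ^ α k

/-- The Euler integral `∫ₐᵇ t ^ γ ∏ₖ (x₁ₖ + x₂ₖ t) ^ αₖ dt`, whose expansion is the series `F`. -/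
noncomputable def eulerIntegral [Fintype ι] (α : ι → ℂ) (γ : ℂ) (a b : ℝ)
    (x : Fin 2 × ι → ℝ) : ℂ :=
  ∫ t in a..b, eulerIntegrand α γ x t

variable {α : ι → ℂ} {γ : ℂ} {a b t : ℝ} {x : Fin 2 × ι → ℝ}

theorem continuous_linearForms (k : ι) :
    Continuous fun q : (Fin 2 × ι → ℝ) × ℝ => linearForms q.1 q.2 k := by
  unfold linearForms
  fun_prop

theorem isOpen_eulerDomain [Finite ι] (a b : ℝ) : IsOpen (eulerDomain ι a b) := by
  refine isOpen_iff_mem_nhds.2 fun x hx =>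
    isCompact_uIcc.eventually_forall_of_forall_eventually fun t ht =>
      Filter.eventually_all.2 fun k => ?_
  exact (continuous_linearForms k).continuousAt.eventually_const_lt (hx t ht k)

theorem linearForms_update [DecidableEq ι] (x : Fin 2 × ι → ℝ) (t : ℝ) (e : Fin 2) (j : ι) (s : ℝ) :
    linearForms (update x (e, j) s) t =
      update (linearForms x t) j (linearForms x t j + (s - x (e, j)) * t ^ (e : ℕ)) := by
  ext k
  obtain rfl | hk := eq_or_ne k j
  · fin_cases e <;> grind [linearForms]
  · simp [linearForms, hk]

variable [Fintype ι]

theorem continuousOn_eulerIntegrand (α : ι → ℂ) (γ : ℂ) (ha : 0 < a) (hb : 0 < b) :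
    ContinuousOn (uncurry (eulerIntegrand α γ)) (eulerDomain ι a b ×ˢ [[a, b]]) := by
  have hlin (k : ι) := continuous_linearForms k
  refine ContinuousOn.mul ?_ (continuousOn_finsetProd _ fun k _ => ?_)
  · refine ContinuousOn.cpow (by fun_prop) continuousOn_const fun q hq => ?_
    exact ofReal_mem_slitPlane.2 ((lt_min ha hb).trans_le hq.2.1)
  · refine ContinuousOn.cpow (by fun_prop) continuousOn_const fun q hq => ?_
    exact ofReal_mem_slitPlane.2 (hq.1 q.2 hq.2 k)

variable [DecidableEq ι]

theorem hasDerivAt_eulerIntegrand_update (α : ι → ℂ) (γ : ℂ) (e : Fin 2) {j : ι} (ht : t ≠ 0)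
    (hx : 0 < linearForms x t j) :
    HasDerivAt (fun s => eulerIntegrand α γ (update x (e, j) s) t)
      (α j * eulerIntegrand (α - Pi.single j 1) (γ + (e : ℕ)) x t) (x (e, j)) := by
  have hform : HasDerivAt
      (fun s => ((linearForms x t j + (s - x (e, j)) * t ^ (e : ℕ) : ℝ) : ℂ))
      ((t ^ (e : ℕ) : ℝ) : ℂ) (x (e, j)) := by
    simpa using ((((hasDerivAt_id (x (e, j))).sub_const (x (e, j))).mul_const
      (t ^ (e : ℕ))).const_add (linearForms x t j)).ofReal_comp
  have hprod := (hasDerivAt_prod_cpow_update (z := fun k => (linearForms x t k : ℂ)) α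
    (ofReal_mem_slitPlane.2 hx)).comp_of_eq (x (e, j)) hform (by simp)
  have hintegrand : (fun s => eulerIntegrand α γ (update x (e, j) s) t) = fun s => (t : ℂ) ^ γ *
      ∏ k, update (fun k => (linearForms x t k : ℂ)) j
        ((linearForms x t j + (s - x (e, j)) * t ^ (e : ℕ) : ℝ) : ℂ) k ^ α k := by
    ext s
    simp only [eulerIntegrand, linearForms_update, apply_update (fun _ (r : ℝ) => (r : ℂ))]
  have hvalue : α j * eulerIntegrand (α - Pi.single j 1) (γ + (e : ℕ)) x t = (t : ℂ) ^ γ *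
      (α j * (∏ k, (linearForms x t k : ℂ) ^ (α - Pi.single j 1 : ι → ℂ) k) *
        ((t ^ (e : ℕ) : ℝ) : ℂ)) := by
    rw [eulerIntegrand, cpow_add _ _ (ofReal_ne_zero.2 ht), cpow_natCast, ofReal_pow]
    ring
  rw [hintegrand, hvalue]
  exact hprod.const_mul _

theorem hasDerivAt_eulerIntegral_update (α : ι → ℂ) (γ : ℂ) (e : Fin 2) (j : ι) (ha : 0 < a)
    (hb : 0 < b) (hx : x ∈ eulerDomain ι a b) :
    HasDerivAt (fun s => eulerIntegral α γ a b (update x (e, j) s))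
      (α j * eulerIntegral (α - Pi.single j 1) (γ + (e : ℕ)) a b x) (x (e, j)) := by
  have hupdate : Continuous fun s => update x (e, j) s := by fun_prop
  set S := (fun s => update x (e, j) s) ⁻¹' eulerDomain ι a b
  have hS : S ∈ 𝓝 (x (e, j)) :=
    ((isOpen_eulerDomain a b).preimage hupdate).mem_nhds (by simpa [S] using hx)
  have hcont (β : ι → ℂ) (δ : ℂ) :
      ContinuousOn (uncurry fun s => eulerIntegrand β δ (update x (e, j) s)) (S ×ˢ [[a, b]]) :=
    (continuousOn_eulerIntegrand β δ ha hb).comp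
      (f := fun q : ℝ × ℝ => (update x (e, j) q.1, q.2)) (by fun_prop) fun q hq => hq
  have hderiv := hasDerivAt_intervalIntegral_of_continuousOn
    (f' := fun s t => α j *
      eulerIntegrand (α - Pi.single j 1) (γ + (e : ℕ)) (update x (e, j) s) t) hS
    (fun s hs => (hcont α γ).comp (f := fun t => (s, t)) (by fun_prop) fun t ht => ⟨hs, ht⟩)
    ((hcont (α - Pi.single j 1) (γ + (e : ℕ))).const_mul (α j))
    (fun s hs t ht => by
      simpa using hasDerivAt_eulerIntegrand_update α γ e ((lt_min ha hb).trans_le ht.1).ne'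
        (hs t ht j))
  simpa [eulerIntegral] using hderiv

end EulerIntegral

section SeriesExpansion

variable {n : ℕ}

theorem cm_eq_prod_choose_mul_integral_cpow (α : Fin n → ℂ) {γ : ℂ} {a b : ℝ}
    (hab : 0 ∉ [[a, b]]) (hγ : ∀ j : ℕ, γ ≠ -((j : ℂ) + 1)) (m : Fin n → ℕ) :
    cm α γ a b m =
      (∏ k, Ring.choose (α k) (m k)) * ∫ t in a..b, (t : ℂ) ^ (γ + (∑ k, m k : ℕ)) := by
  have hne : γ + (∑ k, m k : ℕ) ≠ -1 := fun h => hγ (∑ k, m k) (by linear_combination h)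
  rw [integral_cpow (.inr ⟨hne, hab⟩), cm]
  simp only [choose_eq_ascPochhammer_eval_neg, Finset.prod_mul_distrib,
    Finset.prod_div_distrib, Finset.prod_pow_eq_pow_sum]
  simp only [div_eq_mul_inv, mul_inv]
  ring

theorem hasSum_cm_mul_prod_pow (α : Fin n → ℂ) {γ : ℂ} {a b : ℝ} (ha : 0 < a) (hab : a ≤ b)
    (hγ : ∀ j : ℕ, γ ≠ -((j : ℂ) + 1)) {v : Fin n → ℂ} (hv : ∀ k, ‖v k‖ * b < 1) :
    HasSum (fun m => cm α γ a b m * ∏ k, v k ^ m k)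
      (∫ t in a..b, (t : ℂ) ^ γ * ∏ k, (1 + v k * t) ^ α k) := by
  have hpos : ∀ t ∈ [[a, b]], 0 < t := fun t ht => by
    rw [Set.uIcc_of_le hab] at ht
    exact ha.trans_le ht.1
  have h0 : 0 ∉ [[a, b]] := fun h => (hpos 0 h).false
  have hle : ∀ t ∈ [[a, b]], |t| ≤ b := fun t ht => by
    rw [abs_of_pos (hpos t ht)]
    rw [Set.uIcc_of_le hab] at ht
    exact ht.2
  refine (hasSum_integral_mul_prod_one_add_cpow α
    (intervalIntegral.intervalIntegrable_cpow (.inr h0)) hle hv).congr_fun fun m => ?_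
  rw [cm_eq_prod_choose_mul_integral_cpow α h0 hγ, mul_right_comm, ← Finset.prod_mul_distrib,
    ← intervalIntegral.integral_const_mul]
  refine intervalIntegral.integral_congr fun t ht => ?_
  simp only [mul_pow, ← mul_assoc, Finset.prod_mul_distrib, Finset.prod_pow_eq_pow_sum,
    cpow_add _ _ (ofReal_ne_zero.2 (hpos t ht).ne'), cpow_natCast]
  ring

theorem prod_cpow_mul_eq_eulerIntegrand {ι : Type*} [Fintype ι] (α : ι → ℂ) (γ : ℂ)
    {x : Fin 2 × ι → ℝ} {t : ℝ} (hx : ∀ k, 0 < x (0, k)) (hxt : ∀ k, 0 ≤ linearForms x t k) :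
    (∏ k, (x (0, k) : ℂ) ^ α k) * ((t : ℂ) ^ γ * ∏ k, 
      (1 + ((x (1, k) / x (0, k) : ℝ) : ℂ) * t) ^ α k) =
      eulerIntegrand α γ x t := by
  rw [mul_left_comm, ← Finset.prod_mul_distrib, eulerIntegrand]
  congr! 2 with k
  have hfactor : linearForms x t k = x (0, k) * (1 + x (1, k) / x (0, k) * t) := by
    have := (hx k).ne'
    rw [linearForms]
    field_simp
  have hnonneg : 0 ≤ 1 + x (1, k) / x (0, k) * t :=
    nonneg_of_mul_nonneg_right (hfactor ▸ hxt k) (hx k)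
  rw [hfactor, ofReal_mul, mul_cpow_ofReal_nonneg (hx k).le hnonneg]
  push_cast
  rfl

/-- A domain on which `F` converges absolutely. It contains the `U₀` of the statement; the second
row of coordinates may have any signs. -/
def convergenceDomain (n : ℕ) (b : ℝ) : Set (Fin 2 × Fin n → ℝ) :=
  {x | ∀ k, |x (1, k)| * b < x (0, k)}

theorem isOpen_convergenceDomain (n : ℕ) (b : ℝ) : IsOpen (convergenceDomain n b) := by
  simp only [convergenceDomain, Set.ofPred_forall]
  exact isOpen_iInter_of_finite fun k => isOpen_lt (by fun_prop) (by fun_prop)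

theorem convergenceDomain_subset_eulerDomain {a b : ℝ} (ha : 0 ≤ a) (hab : a ≤ b) :
    convergenceDomain n b ⊆ eulerDomain (Fin n) a b := by
  intro x hx t ht k
  rw [Set.uIcc_of_le hab] at ht
  have hlower : -(|x (1, k)| * b) ≤ x (1, k) * t := by
    refine neg_le_of_abs_le ?_
    rw [abs_mul, abs_of_nonneg (ha.trans ht.1)]
    gcongr
    exact ht.2
  rw [linearForms]
  linarith [hx k]

theorem Fser_eq_eulerIntegral (α : Fin n → ℂ) {γ : ℂ} {a b : ℝ} (ha : 0 < a) (hab : a ≤ b)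
    (hγ : ∀ j : ℕ, γ ≠ -((j : ℂ) + 1)) {x : Fin 2 × Fin n → ℝ} (hx : x ∈ convergenceDomain n b) :
    Fser α γ a b x = eulerIntegral α γ a b x := by
  have hx0 (k : Fin n) : 0 < x (0, k) :=
    (mul_nonneg (abs_nonneg _) (ha.le.trans hab)).trans_lt (hx k)
  have hratio (k : Fin n) : ‖((x (1, k) / x (0, k) : ℝ) : ℂ)‖ * b < 1 := by
    rw [norm_real, Real.norm_eq_abs, abs_div, abs_of_pos (hx0 k), div_mul_eq_mul_div,
      div_lt_one (hx0 k)]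
    exact hx k
  rw [Fser, (hasSum_cm_mul_prod_pow α ha hab hγ hratio).tsum_eq,
    ← intervalIntegral.integral_const_mul]
  exact intervalIntegral.integral_congr fun t ht => prod_cpow_mul_eq_eulerIntegrand α γ hx0
    fun k => (convergenceDomain_subset_eulerDomain ha.le hab hx t ht k).le

end SeriesExpansion

section ToricOperators

variable {n : ℕ}

theorem pd_eventuallyEq {f g : (Fin 2 × Fin n → ℝ) → ℂ} {x : Fin 2 × Fin n → ℝ}
    (p : Fin 2 × Fin n) (h : f =ᶠ[𝓝 x] g) : pd p f =ᶠ[𝓝 x] pd p g := by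
  filter_upwards [h.eventually_nhds] with y hy
  have hupdate : Filter.Tendsto (fun s => update y p s) (𝓝 (y p)) (𝓝 y) := by
    simpa using (show Continuous fun s => update y p s by fun_prop).tendsto (y p)
  exact Filter.EventuallyEq.deriv_eq (hupdate.eventually hy)

theorem pd_eulerIntegral (α : Fin n → ℂ) (γ : ℂ) (e : Fin 2) (j : Fin n) {a b : ℝ} (ha : 0 < a)
    (hb : 0 < b) {x : Fin 2 × Fin n → ℝ} (hx : x ∈ eulerDomain (Fin n) a b) :
    pd (e, j) (eulerIntegral α γ a b) x =
      α j * eulerIntegral (α - Pi.single j 1) (γ + (e : ℕ)) a b x :=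
  (hasDerivAt_eulerIntegral_update α γ e j ha hb hx).deriv

theorem pd_pd_eulerIntegral (α : Fin n → ℂ) (γ : ℂ) (e e' : Fin 2) (i j : Fin n) {a b : ℝ}
    (ha : 0 < a) (hb : 0 < b) {x : Fin 2 × Fin n → ℝ} (hx : x ∈ eulerDomain (Fin n) a b) :
    pd (e, i) (pd (e', j) (eulerIntegral α γ a b)) x =
      α j * (α - Pi.single j 1 : Fin n → ℂ) i *
        eulerIntegral (α - Pi.single j 1 - Pi.single i 1) (γ + (e' : ℕ) + (e : ℕ)) a b x := by
  have hinner : pd (e', j) (eulerIntegral α γ a b) =ᶠ[𝓝 x]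
      fun y => α j * eulerIntegral (α - Pi.single j 1) (γ + (e' : ℕ)) a b y := by
    filter_upwards [(isOpen_eulerDomain a b).mem_nhds hx] with y hy
    exact pd_eulerIntegral α γ e' j ha hb hy
  rw [(pd_eventuallyEq (e, i) hinner).eq_of_nhds, mul_assoc, ← pd_eulerIntegral _ _ e i ha hb hx]
  exact deriv_const_mul_field _

theorem pd_pd_eulerIntegral_comm (α : Fin n → ℂ) (γ : ℂ) (i j : Fin n) {a b : ℝ}
    (ha : 0 < a) (hb : 0 < b) {x : Fin 2 × Fin n → ℝ} (hx : x ∈ eulerDomain (Fin n) a b) :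
    pd (0, i) (pd (1, j) (eulerIntegral α γ a b)) x =
      pd (0, j) (pd (1, i) (eulerIntegral α γ a b)) x := by
  obtain rfl | hij := eq_or_ne i j
  · rfl
  · rw [pd_pd_eulerIntegral α γ 0 1 i j ha hb hx, pd_pd_eulerIntegral α γ 0 1 j i ha hb hx,
      sub_right_comm]
    simp [hij, hij.symm, mul_comm]

theorem stmt11_general (α : Fin n → ℂ) {γ : ℂ} {a b : ℝ} (ha : 0 < a) (hab : a ≤ b)
    (hγ : ∀ j : ℕ, γ ≠ -((j : ℂ) + 1)) (i j : Fin n) {x : Fin 2 × Fin n → ℝ}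
    (hx : ∀ k, |x (1, k)| * b < x (0, k)) :
    pd (0, i) (pd (1, j) (Fser α γ a b)) x = pd (0, j) (pd (1, i) (Fser α γ a b)) x := by
  have hF : Fser α γ a b =ᶠ[𝓝 x] eulerIntegral α γ a b := by
    filter_upwards [(isOpen_convergenceDomain n b).mem_nhds hx] with y hy
    exact Fser_eq_eulerIntegral α ha hab hγ hy
  rw [(pd_eventuallyEq (0, i) (pd_eventuallyEq (1, j) hF)).eq_of_nhds,
    (pd_eventuallyEq (0, j) (pd_eventuallyEq (1, i) hF)).eq_of_nhds]
  exact pd_pd_eulerIntegral_comm α γ i j ha (ha.trans_le hab)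
    (convergenceDomain_subset_eulerDomain ha.le hab hx)

end ToricOperators

/-- on `U₀` the series `F` is annihilated by the toric operator
`∂_{1i}∂_{2j} − ∂_{1j}∂_{2i}`. -/
theorem stmt11 {n : ℕ} (hn : 1 ≤ n) (α : Fin n → ℂ) (γ : ℂ) (a b : ℝ)
    (ha : 0 < a) (hab : a < b) (hγ : ∀ j : ℕ, γ ≠ -((j : ℂ) + 1))
    (i j : Fin n) (hij : i < j) (x : (Fin 2 × Fin n) → ℝ) (hx : ∀ p, 0 < x p)
    (hU : ∀ k, x (1, k) * b < x (0, k)) :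
    pd (0, i) (pd (1, j) (Fser α γ a b)) x
      = pd (0, j) (pd (1, i) (Fser α γ a b)) x :=
  stmt11_general α ha hab.le hγ i j fun k => by simpa only [abs_of_pos (hx (1, k))] using hU k
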